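/- arXiv:2212.14236 — 7 statements merged into one kernel-verified Lean document; each statement's English description precedes it below -/
import Mathlib

section
/- The multi-frequency far-field operator factorizes as F^{(x̂)} = L ∘ 𝒯 ∘ L*, where L* denotes the Hilbert-space adjoint of L. That is, for every φ ∈ L²(0,K) one has F^{(x̂)}φ = L(𝒯(L*φ)) in L²(0,K). -/
open MeasureTheory

noncomputable section

/-- Integrability of a unimodular kernel against a product of integrable functions. -/
lemma ff_integrable {μ ν : Measure ℝ} [SFinite μ] [SFinite ν] {h : ℝ → ℝ}
    (hm : AEStronglyMeasurable h μ) {f p : ℝ → ℂ} (hf : Integrable f ν) (hp : Integrable p μ)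
    (g : ℝ → ℝ) (hg : Continuous g) :
    Integrable (fun z : ℝ × ℝ => Complex.exp (Complex.I * (g z.1 : ℝ) * (h z.2 : ℝ)) *
      (f z.1 * p z.2)) (ν.prod μ) := by
  have h1 : AEStronglyMeasurable (fun z : ℝ × ℝ => h z.2) (ν.prod μ) := hm.comp_snd
  have h2 : AEStronglyMeasurable (fun z : ℝ × ℝ => g z.1) (ν.prod μ) :=
    (hg.comp continuous_fst).aestronglyMeasurable
  refine (hf.mul_prod hp).bdd_mul (c := 1) ?_ ?_
  · refine Complex.continuous_exp.comp_aestronglyMeasurable ?_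
    refine (AEStronglyMeasurable.const_mul ?_ _).mul ?_
    · exact Complex.continuous_ofReal.comp_aestronglyMeasurable h2
    · exact Complex.continuous_ofReal.comp_aestronglyMeasurable h1
  · refine Filter.Eventually.of_forall fun z => ?_
    rw [show Complex.I * (g z.1 : ℝ) * (h z.2 : ℝ) = ((g z.1 * h z.2 : ℝ) : ℂ) * Complex.I by
      push_cast; ring, Complex.norm_exp_ofReal_mul_I]

/-- The adjoint of the data-to-pattern operator is given by the conjugate kernel. -/
lemma ff_adjoint {μ ν : Measure ℝ} [IsFiniteMeasure μ] [IsFiniteMeasure ν] {h : ℝ → ℝ}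
    (hm : AEStronglyMeasurable h μ) (L : Lp ℂ 2 μ →L[ℂ] Lp ℂ 2 ν)
    (hL : ∀ ψ : Lp ℂ 2 μ, (L ψ : ℝ → ℂ) =ᵐ[ν]
      fun τ => ∫ t, Complex.exp (-(Complex.I) * τ * (h t)) * ψ t ∂μ) (φ : Lp ℂ 2 ν) :
    (ContinuousLinearMap.adjoint L φ : ℝ → ℂ) =ᵐ[μ]
      fun t => ∫ s, Complex.exp (Complex.I * s * (h t)) * φ s ∂ν := by
  have hφ : Integrable (φ : ℝ → ℂ) ν := (Lp.memLp φ).integrable (by norm_num)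
  set g : ℝ → ℂ := fun t => ∫ s, Complex.exp (Complex.I * s * (h t)) * φ s ∂ν with hgdef
  have hgm : AEStronglyMeasurable g μ := by
    have := (ff_integrable hm hφ (integrable_const (1 : ℂ)) (fun s => s)
      continuous_id).aestronglyMeasurable.prod_swap.integral_prod_right'
    simpa [hgdef] using this
  have hg : MemLp g 2 μ := by
    refine MemLp.of_bound hgm (∫ s, ‖φ s‖ ∂ν) (Filter.Eventually.of_forall fun t => ?_)
    refine (norm_integral_le_integral_norm _).trans (le_of_eq ?_)
    congr 1
    ext s
    rw [norm_mul, show Complex.I * (s : ℂ) * (h t : ℂ) = ((s * h t : ℝ) : ℂ) * Complex.I by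
      push_cast; ring, Complex.norm_exp_ofReal_mul_I, one_mul]
  have key : ContinuousLinearMap.adjoint L φ = hg.toLp g := by
    refine ext_inner_right ℂ fun ψ => ?_
    have hψ : Integrable (ψ : ℝ → ℂ) μ := (Lp.memLp ψ).integrable (by norm_num)
    have hφc : Integrable (fun s => (starRingEnd ℂ) (φ s)) ν :=
      (Complex.conjLIE.integrable_comp_iff (φ := (φ : ℝ → ℂ))).2 hφ
    rw [ContinuousLinearMap.adjoint_inner_left, L2.inner_def, L2.inner_def]
    have e1 : ∫ s, inner ℂ (φ s) (L ψ s) ∂ν = ∫ s, ∫ t,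
        Complex.exp (Complex.I * ((-s : ℝ) : ℂ) * (h t)) *
          ((starRingEnd ℂ) (φ s) * ψ t) ∂μ ∂ν := by
      refine integral_congr_ae ?_
      filter_upwards [hL ψ] with s hs
      rw [hs, RCLike.inner_apply, mul_comm, ← integral_const_mul]
      congr 1
      ext t
      push_cast
      ring_nf
    have e2 : ∫ t, inner ℂ (hg.toLp g t) (ψ t) ∂μ = ∫ t, ∫ s,
        Complex.exp (Complex.I * ((-s : ℝ) : ℂ) * (h t)) *
          ((starRingEnd ℂ) (φ s) * ψ t) ∂ν ∂μ := by
      refine integral_congr_ae ?_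
      filter_upwards [hg.coeFn_toLp] with t ht
      rw [ht, RCLike.inner_apply, hgdef, ← integral_conj, ← integral_const_mul]
      congr 1
      ext s
      rw [map_mul, ← Complex.exp_conj]
      simp only [map_mul, Complex.conj_I, Complex.conj_ofReal]
      push_cast
      ring_nf
    rw [e1, e2]
    exact integral_integral_swap
      (ff_integrable hm hφc hψ (fun s => -s) continuous_neg)
  rw [key]
  exact hg.coeFn_toLp

/-- The multi-frequency far-field operator factorizes as
`F^{(x̂)} = L ∘ 𝒯 ∘ L*`: for every `φ ∈ L²(0,K)` one has `F^{(x̂)}φ = L(𝒯(L*φ))` in `L²(0,K)`.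
Here `(Lψ)(τ) = ∫_{t_min}^{t_max} e^{−iτ h(t)} ψ(t) dt`,
`(𝒯φ)(t) = (1/√(2π)) e^{−iκ h(t)} φ(t)`, `h(t) = t + x̂·a(t)`,
`w∞(x̂,k) = (1/√(2π)) ∫_{t_min}^{t_max} e^{−ik h(t)} dt` and
`(F^{(x̂)}φ)(τ) = ∫_0^K w∞(x̂, κ+τ−s) φ(s) ds`. -/
theorem farFieldOperator_factorization
    {d : ℕ} (hd : d = 2 ∨ d = 3)
    (tmin tmax : ℝ) (htmin : 0 < tmin) (htt : tmin < tmax)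
    (kmin kmax : ℝ) (hkmin : 0 < kmin) (hkk : kmin < kmax)
    (κ K : ℝ) (hκ : κ = (kmin + kmax) / 2) (hKdef : K = (kmax - kmin) / 2)
    (a : ℝ → EuclideanSpace ℝ (Fin d))
    (ha : ContDiffOn ℝ 1 a (Set.Icc tmin tmax))
    (xhat : EuclideanSpace ℝ (Fin d)) (hxhat : ‖xhat‖ = 1)
    (h : ℝ → ℝ) (hh : ∀ t, h t = t + inner ℝ xhat (a t))
    (w : ℝ → ℂ)
    (hw : ∀ k : ℝ, w k = (1 / Real.sqrt (2 * Real.pi)) *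
      ∫ t in Set.Ioo tmin tmax, Complex.exp (-(Complex.I) * k * (h t)))
    (F : Lp ℂ 2 (volume.restrict (Set.Ioo 0 K)) →L[ℂ]
         Lp ℂ 2 (volume.restrict (Set.Ioo 0 K)))
    (hF : ∀ φ : Lp ℂ 2 (volume.restrict (Set.Ioo 0 K)),
      (F φ : ℝ → ℂ) =ᵐ[volume.restrict (Set.Ioo 0 K)]
        fun τ => ∫ s in Set.Ioo 0 K, w (κ + τ - s) * φ s)
    (L : Lp ℂ 2 (volume.restrict (Set.Ioo tmin tmax)) →L[ℂ]
         Lp ℂ 2 (volume.restrict (Set.Ioo 0 K)))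
    (hL : ∀ ψ : Lp ℂ 2 (volume.restrict (Set.Ioo tmin tmax)),
      (L ψ : ℝ → ℂ) =ᵐ[volume.restrict (Set.Ioo 0 K)]
        fun τ => ∫ t in Set.Ioo tmin tmax,
          Complex.exp (-(Complex.I) * τ * (h t)) * ψ t)
    (T : Lp ℂ 2 (volume.restrict (Set.Ioo tmin tmax)) →L[ℂ]
         Lp ℂ 2 (volume.restrict (Set.Ioo tmin tmax)))
    (hT : ∀ φ : Lp ℂ 2 (volume.restrict (Set.Ioo tmin tmax)),
      (T φ : ℝ → ℂ) =ᵐ[volume.restrict (Set.Ioo tmin tmax)]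
        fun t => (1 / Real.sqrt (2 * Real.pi)) *
          Complex.exp (-(Complex.I) * κ * (h t)) * φ t) :
    ∀ φ : Lp ℂ 2 (volume.restrict (Set.Ioo 0 K)),
      F φ = L (T (ContinuousLinearMap.adjoint L φ)) := by
  intro φ
  have hm : AEStronglyMeasurable h (volume.restrict (Set.Ioo tmin tmax)) := by
    have hc : ContinuousOn h (Set.Icc tmin tmax) := by
      have : h = fun t => t + inner ℝ xhat (a t) := funext hh
      rw [this]
      exact continuousOn_id.add (continuousOn_const.inner ha.continuousOn)
    exact (hc.mono Set.Ioo_subset_Icc_self).aestronglyMeasurable measurableSet_Ioo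
  have hA := ff_adjoint hm L hL φ
  have hTA := hT (ContinuousLinearMap.adjoint L φ)
  have hφ : Integrable (φ : ℝ → ℂ) (volume.restrict (Set.Ioo 0 K)) :=
    (Lp.memLp φ).integrable (by norm_num)
  refine Lp.ext ?_
  filter_upwards [hF φ, hL (T (ContinuousLinearMap.adjoint L φ))] with τ h1 h2
  rw [h1, h2]
  have e1 : ∫ s in Set.Ioo 0 K, w (κ + τ - s) * φ s = ∫ s in Set.Ioo 0 K,
      ∫ t in Set.Ioo tmin tmax, Complex.exp (Complex.I * ((-(κ + τ - s) : ℝ) : ℂ) * (h t)) *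
        (φ s * (1 / Real.sqrt (2 * Real.pi) : ℂ)) := by
    congr 1
    ext s
    rw [hw, integral_mul_const]
    push_cast
    simp only [neg_mul, mul_neg]
    ring
  have e2 : ∫ t in Set.Ioo tmin tmax, Complex.exp (-(Complex.I) * τ * (h t)) *
      (T (ContinuousLinearMap.adjoint L φ)) t = ∫ t in Set.Ioo tmin tmax,
      ∫ s in Set.Ioo 0 K, Complex.exp (Complex.I * ((-(κ + τ - s) : ℝ) : ℂ) * (h t)) *
        (φ s * (1 / Real.sqrt (2 * Real.pi) : ℂ)) := by
    refine integral_congr_ae ?_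
    filter_upwards [hA, hTA] with t ha1 ht1
    rw [ht1, ha1, ← integral_const_mul, ← integral_const_mul]
    congr 1
    ext s
    rw [show Complex.I * ((-(κ + τ - s) : ℝ) : ℂ) * (h t : ℂ) =
      -Complex.I * τ * h t + -Complex.I * κ * h t + Complex.I * s * h t by push_cast; ring,
      Complex.exp_add, Complex.exp_add]
    ring
  rw [e1, e2]
  exact integral_integral_swap (ff_integrable hm hφ
    (integrable_const (1 / Real.sqrt (2 * Real.pi) : ℂ)) (fun s => -(κ + τ - s)) (by fun_prop))
end
end

section
/- Assume the function h(t) = t + x̂·a(t) is not constant on [t_min, t_max]. Then the adjoint L* : L²(0, K) → L²(t_min, t_max) of the data-to-pattern operator L is injective; equivalently, the range of L is dense in L²(0, K). -/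
open MeasureTheory

noncomputable section

open scoped FourierTransform SchwartzMap ContDiff Topology
open Filter

lemma ae_zero_of_fourier_zero (f : ℝ → ℂ) (hf : Integrable f)
    (h0 : ∀ x : ℝ, ∫ s : ℝ, Complex.exp (-(Complex.I) * s * x) * f s = 0) :
    ∀ᵐ s, f s = 0 := by
  have hF : ∀ ξ : ℝ, 𝓕 f ξ = 0 := by
    intro ξ
    rw [Real.fourier_real_eq_integral_exp_smul, ← h0 (2 * Real.pi * ξ)]
    congr 1
    ext v
    rw [smul_eq_mul]
    congr 2
    push_cast
    ring
  apply ae_eq_zero_of_integral_contDiff_smul_eq_zero hf.locallyIntegrable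
  intro g g_smooth g_cpt
  have hg₁ : HasCompactSupport (Complex.ofRealCLM ∘ g) := g_cpt.comp_left rfl
  have hg₂ : ContDiff ℝ ∞ (Complex.ofRealCLM ∘ g) := by fun_prop
  let G : 𝓢(ℝ, ℂ) := hg₁.toSchwartzMap hg₂
  have hG : ∀ x, G x = (g x : ℂ) := fun x => rfl
  let H : 𝓢(ℝ, ℂ) := 𝓕⁻ G
  have hH : 𝓕 (H : ℝ → ℂ) = G := by
    rw [← SchwartzMap.fourier_coe]
    simp [H]
  have key := VectorFourier.integral_bilin_fourierIntegral_eq_flip (ContinuousLinearMap.mul ℂ ℂ)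
    (L := innerₗ ℝ) (μ := volume) (ν := volume)
    Real.continuous_fourierChar continuous_inner H.integrable hf
  have e1 : VectorFourier.fourierIntegral Real.fourierChar volume (innerₗ ℝ) (H : ℝ → ℂ) = G := hH
  have e2 : VectorFourier.fourierIntegral Real.fourierChar volume (innerₗ ℝ).flip f = 0 := by
    rw [flip_innerₗ]
    ext ξ
    exact hF ξ
  rw [e1, e2] at key
  simpa [hG] using key

lemma differentiable_laplace (K : ℝ) (g : ℝ → ℂ) (hg : Integrable g (volume.restrict (Set.Ioo 0 K))) :
    Differentiable ℂ
      (fun z : ℂ => ∫ s in Set.Ioo 0 K, Complex.exp (-(Complex.I) * s * z) * g s) := by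
  intro z₀
  have hm : ∀ z : ℂ, AEStronglyMeasurable (fun s : ℝ => Complex.exp (-(Complex.I) * s * z))
      (volume.restrict (Set.Ioo 0 K)) := fun z =>
    (by fun_prop : Continuous fun s : ℝ => Complex.exp (-(Complex.I) * s * z)).aestronglyMeasurable
  have hb : ∀ z : ℂ, ∀ s ∈ Set.Ioo 0 K,
      ‖Complex.exp (-(Complex.I) * s * z)‖ ≤ Real.exp (K * ‖z‖) := by
    intro z s hs
    refine (Complex.norm_exp_le_exp_norm _).trans (Real.exp_le_exp.2 ?_)
    simp only [norm_mul, norm_neg, Complex.norm_I, one_mul, Complex.norm_real, Real.norm_eq_abs,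
      abs_of_pos hs.1]
    exact mul_le_mul_of_nonneg_right hs.2.le (norm_nonneg _)
  have := hasDerivAt_integral_of_dominated_loc_of_deriv_le
    (μ := volume.restrict (Set.Ioo 0 K))
    (F := fun (z : ℂ) (s : ℝ) => Complex.exp (-(Complex.I) * s * z) * g s)
    (F' := fun (z : ℂ) (s : ℝ) => Complex.exp (-(Complex.I) * s * z) * (-(Complex.I) * s) * g s)
    (x₀ := z₀) (s := Metric.ball z₀ 1)
    (bound := fun s => Real.exp (K * (‖z₀‖ + 1)) * K * ‖g s‖)
    (Metric.ball_mem_nhds _ one_pos)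
    (Eventually.of_forall fun z => (hm z).mul hg.1)
    (hg.bdd_mul (hm z₀) ((ae_restrict_iff' measurableSet_Ioo).2 (Eventually.of_forall (hb z₀))))
    (((hm z₀).mul (by fun_prop : Continuous fun s : ℝ => -(Complex.I) * s).aestronglyMeasurable).mul
      hg.1) ?_ (hg.norm.const_mul _) ?_
  · exact this.2.differentiableAt
  · refine (ae_restrict_iff' measurableSet_Ioo).2 (Eventually.of_forall ?_)
    intro s hs z hz
    have hK : 0 < K := hs.1.trans hs.2
    rw [norm_mul, norm_mul]
    gcongr
    · refine (hb z s hs).trans (Real.exp_le_exp.2 ?_)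
      gcongr
      have : ‖z - z₀‖ < 1 := by simpa [dist_eq_norm] using hz
      have := norm_le_norm_add_norm_sub' z z₀
      linarith
    · simpa [abs_of_pos hs.1] using hs.2.le
  · refine Eventually.of_forall ?_
    intro s z _
    have h1 : HasDerivAt (fun z : ℂ => -(Complex.I) * s * z) (-(Complex.I) * s) z := by
      simpa using (hasDerivAt_id z).const_mul (-(Complex.I) * s)
    exact h1.cexp.mul_const _

lemma laplace_zero (K : ℝ) (g : ℝ → ℂ) (hg : Integrable g (volume.restrict (Set.Ioo 0 K)))
    (p q : ℝ) (hpq : p < q)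
    (h0 : ∀ x ∈ Set.Icc p q, ∫ s in Set.Ioo 0 K, Complex.exp (-(Complex.I) * s * (x : ℝ)) * g s = 0) :
    g =ᵐ[volume.restrict (Set.Ioo 0 K)] 0 := by
  have hd := differentiable_laplace K g hg
  have hall : ∀ z : ℂ, ∫ s in Set.Ioo 0 K, Complex.exp (-(Complex.I) * s * z) * g s = 0 := by
    have ht : Tendsto (fun x : ℝ => (x : ℂ)) (𝓝[>] p) (𝓝[≠] (p : ℂ)) := by
      refine tendsto_nhdsWithin_iff.2 ⟨?_, ?_⟩
      · exact (Complex.continuous_ofReal.tendsto p).mono_left nhdsWithin_le_nhds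
      · filter_upwards [self_mem_nhdsWithin] with x hx
        simpa using (ne_of_gt hx)
    have hev : ∀ᶠ x : ℝ in 𝓝[>] p,
        ∫ s in Set.Ioo 0 K, Complex.exp (-(Complex.I) * s * (x : ℝ)) * g s = 0 := by
      filter_upwards [Ioc_mem_nhdsGT hpq] with x hx
      exact h0 x ⟨hx.1.le, hx.2⟩
    have hfr := ht.frequently (p := fun z : ℂ =>
      ∫ s in Set.Ioo 0 K, Complex.exp (-(Complex.I) * s * z) * g s = 0) hev.frequently
    have han : AnalyticOnNhd ℂ (fun z : ℂ =>
      ∫ s in Set.Ioo 0 K, Complex.exp (-(Complex.I) * s * z) * g s) Set.univ :=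
      hd.differentiableOn.analyticOnNhd isOpen_univ
    intro z
    exact han.eqOn_zero_of_preconnected_of_frequently_eq_zero isPreconnected_univ
      (Set.mem_univ _) hfr (Set.mem_univ z)
  have := ae_zero_of_fourier_zero ((Set.Ioo 0 K).indicator g)
    ((integrable_indicator_iff measurableSet_Ioo).2 hg) (by
      intro x
      rw [← hall x, ← integral_indicator measurableSet_Ioo]
      congr 1
      ext s
      by_cases hs : s ∈ Set.Ioo 0 K <;> simp [hs])
  refine (ae_restrict_iff' measurableSet_Ioo).2 ?_
  filter_upwards [this] with s hs hmem
  simpa [hmem] using hs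

lemma fubini_pair (K tmin tmax : ℝ) (h : ℝ → ℝ) (hc : ContinuousOn h (Set.Icc tmin tmax))
    (g ψ : ℝ → ℂ) (hg : Integrable g (volume.restrict (Set.Ioo 0 K)))
    (hψ : Integrable ψ (volume.restrict (Set.Ioo tmin tmax))) :
    ∫ τ in Set.Ioo 0 K, (∫ t in Set.Ioo tmin tmax,
      Complex.exp (-(Complex.I) * τ * (h t)) * ψ t) * g τ =
    ∫ t in Set.Ioo tmin tmax, (∫ τ in Set.Ioo 0 K,
      Complex.exp (-(Complex.I) * τ * (h t)) * g τ) * ψ t := by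
  have hh : AEMeasurable h (volume.restrict (Set.Ioo tmin tmax)) :=
    (hc.mono Set.Ioo_subset_Icc_self).aemeasurable measurableSet_Ioo
  simp_rw [← integral_mul_const]
  rw [integral_integral_swap]
  · congr 1
    ext t
    congr 1
    ext s
    ring
  · have h1 := (hg.mul_prod hψ).bdd_mul (c := 1)
      (f := fun z : ℝ × ℝ => Complex.exp (-(Complex.I) * z.1 * (h z.2))) ?_ ?_
    · refine h1.congr (Eventually.of_forall fun z => ?_)
      simp only [Function.uncurry]
      ring
    · have h2 : AEMeasurable (fun z : ℝ × ℝ => h z.2)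
        ((volume.restrict (Set.Ioo 0 K)).prod (volume.restrict (Set.Ioo tmin tmax))) :=
        hh.comp_snd
      refine AEMeasurable.aestronglyMeasurable ?_
      fun_prop
    · refine Eventually.of_forall fun z => le_of_eq ?_
      rw [Complex.norm_exp]
      simp

lemma ker_zero (tmin tmax : ℝ) (htt : tmin < tmax) (K : ℝ)
    (h : ℝ → ℝ) (hc : ContinuousOn h (Set.Icc tmin tmax))
    (hnc : ∃ t ∈ Set.Icc tmin tmax, ∃ s ∈ Set.Icc tmin tmax, h t ≠ h s)
    (L : Lp ℂ 2 (volume.restrict (Set.Ioo tmin tmax)) →L[ℂ]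
         Lp ℂ 2 (volume.restrict (Set.Ioo 0 K)))
    (hL : ∀ ψ : Lp ℂ 2 (volume.restrict (Set.Ioo tmin tmax)),
      (L ψ : ℝ → ℂ) =ᵐ[volume.restrict (Set.Ioo 0 K)]
        fun τ => ∫ t in Set.Ioo tmin tmax,
          Complex.exp (-(Complex.I) * τ * (h t)) * ψ t)
    (φ : Lp ℂ 2 (volume.restrict (Set.Ioo 0 K))) (hφ : ∀ ψ, inner ℂ φ (L ψ) = 0) : φ = 0 := by
  have hφi : Integrable φ (volume.restrict (Set.Ioo 0 K)) :=
    (Lp.memLp φ).integrable (by norm_num)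
  set g : ℝ → ℂ := fun s => (starRingEnd ℂ) (φ s) with hgdef
  have hg : Integrable g (volume.restrict (Set.Ioo 0 K)) :=
    (Complex.conjCLE : ℂ →L[ℝ] ℂ).integrable_comp hφi
  set F : ℂ → ℂ := fun z => ∫ s in Set.Ioo 0 K, Complex.exp (-(Complex.I) * s * z) * g s with hF
  have hFd : Differentiable ℂ F := differentiable_laplace K g hg
  have hGc : ContinuousOn (fun t => F (h t)) (Set.Icc tmin tmax) :=
    hFd.continuous.comp_continuousOn (Complex.continuous_ofReal.comp_continuousOn hc)
  -- the test function
  obtain ⟨C, hC⟩ := isCompact_Icc.exists_bound_of_continuousOn hGc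
  have hmem : MemLp (fun t => (starRingEnd ℂ) (F (h t))) 2 (volume.restrict (Set.Ioo tmin tmax)) := by
    refine MemLp.of_bound ?_ C ?_
    · exact (Complex.continuous_conj.comp_continuousOn
        (hGc.mono Set.Ioo_subset_Icc_self)).aestronglyMeasurable measurableSet_Ioo
    · refine (ae_restrict_iff' measurableSet_Ioo).2 (Eventually.of_forall fun t ht => ?_)
      simpa using hC t (Set.Ioo_subset_Icc_self ht)
  set ψ := hmem.toLp with hψ
  have hψi : Integrable ψ (volume.restrict (Set.Ioo tmin tmax)) :=
    (Lp.memLp ψ).integrable (by norm_num)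
  have e1 : ∫ t in Set.Ioo tmin tmax, F (h t) * ψ t = 0 := by
    rw [← hφ ψ, L2.inner_def, ← fubini_pair K tmin tmax h hc g ψ hg hψi]
    refine integral_congr_ae ?_
    filter_upwards [hL ψ] with τ hτ
    rw [hτ, RCLike.inner_apply]
  have e2 : ∫ t in Set.Ioo tmin tmax, ‖F (h t)‖ ^ 2 = 0 := by
    have : ((∫ t in Set.Ioo tmin tmax, ‖F (h t)‖ ^ 2 : ℝ) : ℂ) = 0 := by
      rw [← e1, ← integral_complex_ofReal]
      refine integral_congr_ae ?_
      filter_upwards [hmem.coeFn_toLp] with t ht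
      rw [hψ, ht, Complex.mul_conj']
      push_cast
      rfl
    exact_mod_cast this
  have hcN : ContinuousOn (fun t => ‖F (h t)‖ ^ 2) (Set.Icc tmin tmax) := hGc.norm.pow 2
  rw [← integral_Icc_eq_integral_Ioo, integral_eq_zero_iff_of_nonneg (fun t => by positivity)
    hcN.integrableOn_Icc] at e2
  have e3 := Measure.eqOn_Icc_of_ae_eq volume htt.ne e2 hcN continuousOn_const
  have e4 : ∀ t ∈ Set.Icc tmin tmax, F (h t) = 0 := fun t ht => by simpa using e3 ht
  have main : ∀ t ∈ Set.Icc tmin tmax, ∀ s ∈ Set.Icc tmin tmax, h t < h s → φ = 0 := by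
    intro t ht s hs hlt
    have himg : Set.Icc (h t) (h s) ⊆ h '' Set.Icc tmin tmax :=
      (isPreconnected_Icc.image h hc).Icc_subset (Set.mem_image_of_mem h ht)
        (Set.mem_image_of_mem h hs)
    have := laplace_zero K g hg (h t) (h s) hlt (by
      intro x hx
      obtain ⟨u, hu, rfl⟩ := himg hx
      exact e4 u hu)
    rw [Lp.eq_zero_iff_ae_eq_zero]
    filter_upwards [this] with x hx
    simpa [hgdef] using hx
  obtain ⟨t, ht, s, hs, hne⟩ := hnc
  rcases lt_or_gt_of_ne hne with hlt | hlt
  · exact main t ht s hs hlt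
  · exact main s hs t ht hlt

/-- If `h(t) = t + x̂·a(t)` is not constant on `[t_min, t_max]`, then the
adjoint `L*` of the data-to-pattern operator `L` is injective; equivalently, the range of `L`
is dense in `L²(0,K)`. -/
theorem adjoint_dataToPattern_injective_denseRange
    {d : ℕ} (hd : d = 2 ∨ d = 3)
    (tmin tmax : ℝ) (htmin : 0 < tmin) (htt : tmin < tmax)
    (K : ℝ) (hK : 0 < K)
    (a : ℝ → EuclideanSpace ℝ (Fin d))
    (ha : ContDiffOn ℝ 1 a (Set.Icc tmin tmax))
    (xhat : EuclideanSpace ℝ (Fin d)) (hxhat : ‖xhat‖ = 1)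
    (h : ℝ → ℝ) (hh : ∀ t, h t = t + inner ℝ xhat (a t))
    (hnc : ∃ t ∈ Set.Icc tmin tmax, ∃ s ∈ Set.Icc tmin tmax, h t ≠ h s)
    (L : Lp ℂ 2 (volume.restrict (Set.Ioo tmin tmax)) →L[ℂ]
         Lp ℂ 2 (volume.restrict (Set.Ioo 0 K)))
    (hL : ∀ ψ : Lp ℂ 2 (volume.restrict (Set.Ioo tmin tmax)),
      (L ψ : ℝ → ℂ) =ᵐ[volume.restrict (Set.Ioo 0 K)]
        fun τ => ∫ t in Set.Ioo tmin tmax,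
          Complex.exp (-(Complex.I) * τ * (h t)) * ψ t) :
    Function.Injective (ContinuousLinearMap.adjoint L) ∧ DenseRange L := by
  have hc : ContinuousOn h (Set.Icc tmin tmax) := by
    have h1 : ContinuousOn (fun t => t + inner ℝ xhat (a t)) (Set.Icc tmin tmax) :=
      continuousOn_id.add (continuousOn_const.inner ha.continuousOn)
    exact h1.congr fun t _ => hh t
  have hinj : ∀ φ, ContinuousLinearMap.adjoint L φ = 0 → φ = 0 := by
    intro φ hφ
    refine ker_zero tmin tmax htt K h hc hnc L hL φ fun ψ => ?_
    rw [← ContinuousLinearMap.adjoint_inner_left, hφ, inner_zero_left]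
  refine ⟨(injective_iff_map_eq_zero _).2 hinj, ?_⟩
  have ho : (L.range)ᗮ = ⊥ := by
    rw [ContinuousLinearMap.orthogonal_range]
    exact (Submodule.eq_bot_iff _).2 fun φ hφ => hinj φ hφ
  have := Submodule.topologicalClosure_eq_top_iff.2 ho
  have hd : Dense (L.range : Set (Lp ℂ 2 (volume.restrict (Set.Ioo 0 K)))) :=
    Submodule.dense_iff_topologicalClosure_eq_top.2 this
  rw [LinearMap.coe_range] at hd
  exact hd
end
end

section
/- Let a, b : [t_min, t_max] → ℝ^d be continuously differentiable orbit functions, set h_a(t) = t + x̂·a(t) and h_b(t) = t + x̂·b(t), and assume the closed intervals [inf h_a, sup h_a] and [inf h_b, sup h_b] (infima and suprema over [t_min, t_max]) are disjoint. Let L_a^{(x̂)} and L_b^{(x̂)} be the data-to-pattern operators associated with a and b respectively. Then Range(L_a^{(x̂)}) ∩ Range(L_b^{(x̂)}) = {0} in L²(0, K). -/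
open MeasureTheory

noncomputable section

lemma d2p_norm (z : ℂ) (r : ℝ) : ‖Complex.exp (-(Complex.I) * z * r)‖ = Real.exp (z.im * r) := by
  rw [Complex.norm_exp]; simp

lemma d2p_meas {μ : Measure ℝ} {p : ℝ → ℝ} {φ : ℝ → ℂ} (hp : AEStronglyMeasurable p μ)
    (hφ : Integrable φ μ) (z : ℂ) :
    AEStronglyMeasurable (fun t => Complex.exp (-(Complex.I) * z * (p t)) * φ t) μ := by
  refine AEStronglyMeasurable.mul ?_ hφ.1
  exact (by fun_prop : Continuous fun r : ℝ => Complex.exp (-(Complex.I) * z * r)).comp_aestronglyMeasurable hp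

lemma d2p_diff {μ : Measure ℝ} {p : ℝ → ℝ} {φ : ℝ → ℂ} (hp : AEStronglyMeasurable p μ)
    (M : ℝ) (hM : ∀ᵐ t ∂μ, |p t| ≤ M) (hφ : Integrable φ μ) :
    Differentiable ℂ (fun z : ℂ => ∫ t, Complex.exp (-(Complex.I) * z * (p t)) * φ t ∂μ) := by
  intro z
  have key := hasDerivAt_integral_of_dominated_loc_of_deriv_le (μ := μ) (𝕜 := ℂ)
    (F := fun z t => Complex.exp (-(Complex.I) * z * (p t)) * φ t)
    (F' := fun z t => (-(Complex.I) * p t) * (Complex.exp (-(Complex.I) * z * (p t)) * φ t))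
    (x₀ := z) (s := Metric.ball z 1) (bound := fun t => M * (Real.exp ((‖z‖ + 1) * M) * ‖φ t‖))
    (Metric.ball_mem_nhds z one_pos) (Filter.Eventually.of_forall fun w => d2p_meas hp hφ w)
    ?_ ?_ ?_ ?_ ?_
  · exact key.2.differentiableAt
  · refine Integrable.mono' (hφ.norm.const_mul (Real.exp (‖z‖ * M))) (d2p_meas hp hφ z) ?_
    filter_upwards [hM] with t ht
    rw [norm_mul, d2p_norm]
    refine mul_le_mul_of_nonneg_right (Real.exp_le_exp.2 ?_) (norm_nonneg _)
    calc z.im * p t ≤ |z.im * p t| := le_abs_self _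
      _ = |z.im| * |p t| := abs_mul _ _
      _ ≤ ‖z‖ * M := by
        gcongr
        exact Complex.abs_im_le_norm z
  · refine AEStronglyMeasurable.mul ?_ (d2p_meas hp hφ z)
    exact (by fun_prop : Continuous fun r : ℝ => -(Complex.I) * (r : ℂ)).comp_aestronglyMeasurable hp
  · filter_upwards [hM] with t ht w hw
    have hM0 : 0 ≤ M := (abs_nonneg _).trans ht
    rw [norm_mul, norm_mul (Complex.exp _), d2p_norm]
    have h1 : ‖-(Complex.I) * (p t : ℂ)‖ = |p t| := by simp
    rw [h1]
    have hw' : ‖w‖ ≤ ‖z‖ + 1 := by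
      have := norm_le_norm_add_norm_sub' w z
      rw [mem_ball_iff_norm] at hw
      linarith
    refine mul_le_mul ht (mul_le_mul_of_nonneg_right (Real.exp_le_exp.2 ?_) (norm_nonneg _))
      (by positivity) hM0
    calc w.im * p t ≤ |w.im * p t| := le_abs_self _
      _ = |w.im| * |p t| := abs_mul _ _
      _ ≤ (‖z‖ + 1) * M := by
        gcongr
        exact (Complex.abs_im_le_norm w).trans hw'
  · exact (hφ.norm.const_mul _).const_mul _
  · filter_upwards with t w _
    have h : HasDerivAt (fun w : ℂ => -(Complex.I) * w * (p t)) (-(Complex.I) * p t) w := by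
      simpa using ((hasDerivAt_id w).const_mul (-(Complex.I))).mul_const (p t : ℂ)
    exact (h.cexp.mul_const (φ t)).congr_deriv (by ring)

lemma d2p_bound {μ : Measure ℝ} {p : ℝ → ℝ} {φ : ℝ → ℂ} (hφ : Integrable φ μ) (z : ℂ) (C : ℝ)
    (h : ∀ᵐ t ∂μ, z.im * p t ≤ C) :
    ‖∫ t, Complex.exp (-(Complex.I) * z * (p t)) * φ t ∂μ‖ ≤ Real.exp C * ∫ t, ‖φ t‖ ∂μ := by
  rw [← integral_const_mul]
  refine norm_integral_le_of_norm_le (hφ.norm.const_mul _) ?_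
  filter_upwards [h] with t ht
  rw [norm_mul, d2p_norm]
  gcongr

lemma d2p_core {μ : Measure ℝ} {p q : ℝ → ℝ} {φ ψ : ℝ → ℂ} (hp : AEStronglyMeasurable p μ)
    (hq : AEStronglyMeasurable q μ) (M δ K : ℝ) (hK : 0 < K) (hδ : 0 < δ)
    (hpM : ∀ᵐ t ∂μ, |p t| ≤ M) (hqM : ∀ᵐ t ∂μ, |q t| ≤ M)
    (hpn : ∀ᵐ t ∂μ, p t ≤ -δ) (hqn : ∀ᵐ t ∂μ, 0 ≤ q t)
    (hφ : Integrable φ μ) (hψ : Integrable ψ μ)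
    (heq : (fun τ : ℝ => ∫ t, Complex.exp (-(Complex.I) * τ * (p t)) * φ t ∂μ)
      =ᵐ[volume.restrict (Set.Ioo 0 K)]
      (fun τ : ℝ => ∫ t, Complex.exp (-(Complex.I) * τ * (q t)) * ψ t ∂μ)) (z : ℂ) :
    ∫ t, Complex.exp (-(Complex.I) * z * (p t)) * φ t ∂μ = 0 := by
  have dF := d2p_diff hp M hpM hφ
  have dG := d2p_diff hq M hqM hψ
  set F := fun z : ℂ => ∫ t, Complex.exp (-(Complex.I) * z * (p t)) * φ t ∂μ with hF
  set G := fun z : ℂ => ∫ t, Complex.exp (-(Complex.I) * z * (q t)) * ψ t ∂μ with hG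
  have e1 : Set.EqOn (fun τ : ℝ => F τ) (fun τ : ℝ => G τ) (Set.Ioo 0 K) :=
    Measure.eqOn_open_of_ae_eq heq isOpen_Ioo
      (dF.continuous.comp Complex.continuous_ofReal).continuousOn
      (dG.continuous.comp Complex.continuous_ofReal).continuousOn
  have hFG : F = G := by
    refine AnalyticOnNhd.eq_of_frequently_eq (z₀ := ((K / 2 : ℝ) : ℂ))
      (fun z _ => dF.analyticAt z) (fun z _ => dG.analyticAt z) ?_
    have ht : Filter.Tendsto (fun r : ℝ => (r : ℂ)) (nhdsWithin (K / 2) {K / 2}ᶜ)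
        (nhdsWithin ((K / 2 : ℝ) : ℂ) {((K / 2 : ℝ) : ℂ)}ᶜ) := by
      refine tendsto_nhdsWithin_iff.2 ⟨?_, ?_⟩
      · exact (Complex.continuous_ofReal.tendsto _).mono_left nhdsWithin_le_nhds
      · filter_upwards [self_mem_nhdsWithin] with r hr h
        exact hr (Complex.ofReal_injective h)
    refine ht.frequently (Filter.Eventually.frequently ?_)
    have : Set.Ioo 0 K ∈ nhds (K / 2) := Ioo_mem_nhds (by linarith) (by linarith)
    filter_upwards [nhdsWithin_le_nhds this] with r hr
    exact e1 hr
  have hbdd : Bornology.IsBounded (Set.range F) := by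
    rw [isBounded_iff_forall_norm_le]
    refine ⟨max (Real.exp 0 * ∫ t, ‖φ t‖ ∂μ) (Real.exp 0 * ∫ t, ‖ψ t‖ ∂μ), ?_⟩
    rintro _ ⟨w, rfl⟩
    rcases le_total 0 w.im with h | h
    · refine le_max_of_le_left (d2p_bound hφ w 0 ?_)
      filter_upwards [hpn] with t ht
      exact mul_nonpos_of_nonneg_of_nonpos h (by linarith)
    · rw [hFG]
      refine le_max_of_le_right (d2p_bound hψ w 0 ?_)
      filter_upwards [hqn] with t ht
      exact mul_nonpos_of_nonpos_of_nonneg h ht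
  have hconst : ∀ y : ℝ, 0 ≤ y → ‖F z‖ ≤ Real.exp (-(δ * y)) * ∫ t, ‖φ t‖ ∂μ := by
    intro y hy
    rw [dF.apply_eq_apply_of_bounded hbdd z (y * Complex.I)]
    refine d2p_bound hφ _ _ ?_
    filter_upwards [hpn] with t ht
    have : ((y : ℂ) * Complex.I).im = y := by simp
    rw [this]
    nlinarith
  have hlim : Filter.Tendsto (fun y : ℝ => Real.exp (-(δ * y)) * ∫ t, ‖φ t‖ ∂μ) Filter.atTop
      (nhds (0 * ∫ t, ‖φ t‖ ∂μ)) :=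
    (Real.tendsto_exp_neg_atTop_nhds_zero.comp
      (Filter.tendsto_id.const_mul_atTop hδ)).mul_const _
  have : ‖F z‖ ≤ 0 * ∫ t, ‖φ t‖ ∂μ :=
    ge_of_tendsto hlim ((Filter.eventually_ge_atTop 0).mono hconst)
  rw [zero_mul] at this
  exact norm_le_zero_iff.1 this

lemma d2p_shift {μ : Measure ℝ} (h : ℝ → ℝ) (φ : ℝ → ℂ) (c : ℝ) (z : ℂ) :
    ∫ t, Complex.exp (-(Complex.I) * z * ((h t - c : ℝ) : ℂ)) * φ t ∂μ =
    Complex.exp (Complex.I * z * c) * ∫ t, Complex.exp (-(Complex.I) * z * (h t)) * φ t ∂μ := by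
  rw [← integral_const_mul]
  congr 1
  ext t
  rw [← mul_assoc, ← Complex.exp_add]
  congr 2
  push_cast
  ring

lemma d2p_core2 {tmin tmax K : ℝ} (htt : tmin < tmax) (hK : 0 < K) {p q : ℝ → ℝ} {φ ψ : ℝ → ℂ}
    (hp : ContinuousOn p (Set.Icc tmin tmax)) (hq : ContinuousOn q (Set.Icc tmin tmax))
    (hlt : sSup (p '' Set.Icc tmin tmax) < sInf (q '' Set.Icc tmin tmax))
    (hφ : Integrable φ (volume.restrict (Set.Ioo tmin tmax)))
    (hψ : Integrable ψ (volume.restrict (Set.Ioo tmin tmax)))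
    (heq : (fun τ : ℝ => ∫ t in Set.Ioo tmin tmax, Complex.exp (-(Complex.I) * τ * (p t)) * φ t)
      =ᵐ[volume.restrict (Set.Ioo 0 K)]
      (fun τ : ℝ => ∫ t in Set.Ioo tmin tmax, Complex.exp (-(Complex.I) * τ * (q t)) * ψ t))
    (z : ℂ) :
    ∫ t in Set.Ioo tmin tmax, Complex.exp (-(Complex.I) * z * (p t)) * φ t = 0 := by
  obtain ⟨c, hc1, hc2⟩ := exists_between hlt
  have hpc : ContinuousOn (fun t => p t - c) (Set.Icc tmin tmax) := hp.sub continuousOn_const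
  have hqc : ContinuousOn (fun t => q t - c) (Set.Icc tmin tmax) := hq.sub continuousOn_const
  obtain ⟨M1, hM1⟩ := isCompact_Icc.exists_bound_of_continuousOn hpc
  obtain ⟨M2, hM2⟩ := isCompact_Icc.exists_bound_of_continuousOn hqc
  have hae : ∀ᵐ t ∂(volume.restrict (Set.Ioo tmin tmax)), t ∈ Set.Icc tmin tmax :=
    (ae_restrict_mem measurableSet_Ioo).mono fun t ht => Set.Ioo_subset_Icc_self ht
  have main := d2p_core (μ := volume.restrict (Set.Ioo tmin tmax))
    (p := fun t => p t - c) (q := fun t => q t - c) (φ := φ) (ψ := ψ)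
    ((hpc.mono Set.Ioo_subset_Icc_self).aestronglyMeasurable measurableSet_Ioo)
    ((hqc.mono Set.Ioo_subset_Icc_self).aestronglyMeasurable measurableSet_Ioo)
    (max M1 M2) (c - sSup (p '' Set.Icc tmin tmax)) K hK (by linarith)
    (hae.mono fun t ht => le_max_of_le_left (hM1 t ht))
    (hae.mono fun t ht => le_max_of_le_right (hM2 t ht))
    (hae.mono fun t ht => by
      have := le_csSup (isCompact_Icc.image_of_continuousOn hp).bddAbove
        (Set.mem_image_of_mem p ht)
      linarith)
    (hae.mono fun t ht => by
      have := csInf_le (isCompact_Icc.image_of_continuousOn hq).bddBelow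
        (Set.mem_image_of_mem q ht)
      linarith) hφ hψ
    (by
      filter_upwards [heq] with τ hτ
      rw [d2p_shift, d2p_shift, hτ]) z
  rw [d2p_shift] at main
  exact (mul_eq_zero.1 main).resolve_left (Complex.exp_ne_zero _)

/-- Let `a, b` be C¹ orbit functions with `h_a(t) = t + x̂·a(t)`,
`h_b(t) = t + x̂·b(t)`, and assume the closed intervals `[inf h_a, sup h_a]` and
`[inf h_b, sup h_b]` are disjoint. Then the ranges of the associated data-to-pattern
operators intersect trivially: `Range(L_a^{(x̂)}) ∩ Range(L_b^{(x̂)}) = {0}` in `L²(0,K)`. -/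
theorem ranges_dataToPattern_disjoint
    {d : ℕ} (hd : d = 2 ∨ d = 3)
    (tmin tmax : ℝ) (htmin : 0 < tmin) (htt : tmin < tmax)
    (K : ℝ) (hK : 0 < K)
    (a b : ℝ → EuclideanSpace ℝ (Fin d))
    (ha : ContDiffOn ℝ 1 a (Set.Icc tmin tmax))
    (hb : ContDiffOn ℝ 1 b (Set.Icc tmin tmax))
    (xhat : EuclideanSpace ℝ (Fin d)) (hxhat : ‖xhat‖ = 1)
    (hA hB : ℝ → ℝ)
    (hhA : ∀ t, hA t = t + inner ℝ xhat (a t))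
    (hhB : ∀ t, hB t = t + inner ℝ xhat (b t))
    (hdisj : Disjoint
      (Set.Icc (sInf (hA '' Set.Icc tmin tmax)) (sSup (hA '' Set.Icc tmin tmax)))
      (Set.Icc (sInf (hB '' Set.Icc tmin tmax)) (sSup (hB '' Set.Icc tmin tmax))))
    (La Lb : Lp ℂ 2 (volume.restrict (Set.Ioo tmin tmax)) →L[ℂ]
         Lp ℂ 2 (volume.restrict (Set.Ioo 0 K)))
    (hLa : ∀ ψ : Lp ℂ 2 (volume.restrict (Set.Ioo tmin tmax)),
      (La ψ : ℝ → ℂ) =ᵐ[volume.restrict (Set.Ioo 0 K)]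
        fun τ => ∫ t in Set.Ioo tmin tmax,
          Complex.exp (-(Complex.I) * τ * (hA t)) * ψ t)
    (hLb : ∀ ψ : Lp ℂ 2 (volume.restrict (Set.Ioo tmin tmax)),
      (Lb ψ : ℝ → ℂ) =ᵐ[volume.restrict (Set.Ioo 0 K)]
        fun τ => ∫ t in Set.Ioo tmin tmax,
          Complex.exp (-(Complex.I) * τ * (hB t)) * ψ t) :
    Set.range ⇑La ∩ Set.range ⇑Lb = {0} := by
  have cA : ContinuousOn hA (Set.Icc tmin tmax) := by
    rw [funext hhA]
    exact continuousOn_id.add (continuousOn_const.inner ha.continuousOn)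
  have cB : ContinuousOn hB (Set.Icc tmin tmax) := by
    rw [funext hhB]
    exact continuousOn_id.add (continuousOn_const.inner hb.continuousOn)
  have hne : (Set.Icc tmin tmax).Nonempty := Set.nonempty_Icc.2 htt.le
  have iA := Real.sInf_le_sSup _ (isCompact_Icc.image_of_continuousOn cA).bddBelow
    (isCompact_Icc.image_of_continuousOn cA).bddAbove
  have iB := Real.sInf_le_sSup _ (isCompact_Icc.image_of_continuousOn cB).bddBelow
    (isCompact_Icc.image_of_continuousOn cB).bddAbove
  have hint : ∀ ψ : Lp ℂ 2 (volume.restrict (Set.Ioo tmin tmax)),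
      Integrable ψ (volume.restrict (Set.Ioo tmin tmax)) := fun ψ =>
    (Lp.memLp ψ).integrable (by norm_num)
  refine Set.eq_singleton_iff_unique_mem.2 ⟨⟨⟨0, map_zero _⟩, ⟨0, map_zero _⟩⟩, ?_⟩
  rintro f ⟨⟨φ, rfl⟩, ⟨ψ, hψ⟩⟩
  have hb' := hLb ψ
  rw [hψ] at hb'
  have heq := (hLa φ).symm.trans hb'
  rcases lt_or_ge (sSup (hA '' Set.Icc tmin tmax)) (sInf (hB '' Set.Icc tmin tmax)) with h | h
  · have := d2p_core2 htt hK cA cB h (hint φ) (hint ψ) heq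
    rw [Lp.eq_zero_iff_ae_eq_zero]
    filter_upwards [hLa φ] with τ hτ
    rw [hτ, this]
    rfl
  · have h2 : sSup (hB '' Set.Icc tmin tmax) < sInf (hA '' Set.Icc tmin tmax) := by
      by_contra! h3
      refine (Set.disjoint_left.1 hdisj :) (?_ : max (sInf (hA '' Set.Icc tmin tmax))
        (sInf (hB '' Set.Icc tmin tmax)) ∈ _) ?_
      · exact ⟨le_max_left _ _, max_le iA h⟩
      · exact ⟨le_max_right _ _, max_le h3 iB⟩
    have := d2p_core2 htt hK cB cA h2 (hint ψ) (hint φ) heq.symm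
    rw [Lp.eq_zero_iff_ae_eq_zero]
    filter_upwards [hb'] with τ hτ
    rw [hτ, this]
    rfl
end
end

section
/- If there exist y ∈ ℝ^d and ψ ∈ L²(t_min, t_max) such that L^{(x̂)}ψ = φ_y^{(x̂)} in L²(0, K), then ξ_max − ξ_min ≥ T. -/
open MeasureTheory

noncomputable section

lemma aux_diff {μ : Measure ℝ} (g : ℝ → ℝ) (ψ : ℝ → ℂ) (M : ℝ)
    (hg : AEStronglyMeasurable g μ) (hM : ∀ᵐ t ∂μ, |g t| ≤ M) (hψ : Integrable ψ μ) :
    Differentiable ℂ (fun z : ℂ => ∫ t, Complex.exp (-(Complex.I) * z * (g t)) * ψ t ∂μ) := by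
  intro z₀
  have hgc : AEStronglyMeasurable (fun t => (g t : ℂ)) μ :=
    Complex.continuous_ofReal.comp_aestronglyMeasurable hg
  have hexp : ∀ z : ℂ, AEStronglyMeasurable
      (fun t => Complex.exp (-(Complex.I) * z * (g t))) μ := fun z =>
    (show Continuous (fun w : ℂ => Complex.exp (-(Complex.I) * z * w)) by
      fun_prop).comp_aestronglyMeasurable hgc
  have hbd : ∀ z : ℂ, ∀ t, |g t| ≤ M →
      ‖Complex.exp (-(Complex.I) * z * (g t))‖ ≤ Real.exp (‖z‖ * M) := by
    intro z t ht
    refine (Complex.norm_exp_le_exp_norm _).trans (Real.exp_le_exp.2 ?_)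
    simp only [norm_mul, norm_neg, Complex.norm_I, one_mul, Complex.norm_real, Real.norm_eq_abs]
    gcongr
  refine (hasDerivAt_integral_of_dominated_loc_of_deriv_le
    (F' := fun z t => Complex.exp (-(Complex.I) * z * (g t)) * (-(Complex.I) * (g t)) * ψ t)
    (bound := fun t => Real.exp ((‖z₀‖ + 1) * M) * M * ‖ψ t‖)
    (Metric.ball_mem_nhds z₀ one_pos) ?_ ?_ ?_ ?_ ?_ ?_).2.differentiableAt
  · exact Filter.Eventually.of_forall fun z => (hexp z).mul hψ.1
  · exact hψ.bdd_mul (c := Real.exp (‖z₀‖ * M)) (hexp z₀) (hM.mono fun t ht => hbd _ t ht)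
  · exact ((hexp z₀).mul (hgc.const_mul _)).mul hψ.1
  · filter_upwards [hM] with t ht z hz
    have hz' : ‖z‖ ≤ ‖z₀‖ + 1 := by
      have h1 : ‖z - z₀‖ < 1 := by simpa [dist_eq_norm] using hz
      have h2 := norm_le_norm_add_norm_sub' z z₀
      linarith
    have hM0 : 0 ≤ M := (abs_nonneg _).trans ht
    rw [norm_mul, norm_mul]
    gcongr
    · refine (hbd z t ht).trans (Real.exp_le_exp.2 ?_)
      gcongr
    · simpa using ht
  · exact hψ.norm.const_mul _
  · refine Filter.Eventually.of_forall fun t z _ => ?_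
    have h1 : HasDerivAt (fun z : ℂ => -(Complex.I) * z * (g t)) (-(Complex.I) * (g t)) z := by
      simpa using ((hasDerivAt_id z).const_mul (-(Complex.I))).mul_const (g t : ℂ)
    exact (h1.cexp).mul_const _

lemma aux_growth (A B C c : ℝ) (hc : 0 < c)
    (H : ∀ s : ℝ, 0 < s → c * Real.exp (s * A) ≤ C * Real.exp (s * B)) : A ≤ B := by
  by_contra! hlt
  have hd : 0 < A - B := sub_pos.2 hlt
  have hs : 0 < (|C| / c + 1) / (A - B) := by positivity
  have h1 := H _ hs
  set s := (|C| / c + 1) / (A - B) with hsdef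
  have hsd : s * (A - B) = |C| / c + 1 := by rw [hsdef]; field_simp
  have h2 : Real.exp (s * A) = Real.exp (s * (A - B)) * Real.exp (s * B) := by
    rw [← Real.exp_add]; ring_nf
  rw [h2, ← mul_assoc] at h1
  have h3 := le_of_mul_le_mul_right h1 (Real.exp_pos _)
  have h4 := Real.add_one_le_exp (s * (A - B))
  have h5 : c * (s * (A - B) + 1) ≤ C := (mul_le_mul_of_nonneg_left h4 hc.le).trans h3
  rw [hsd] at h5
  have h6 : c * (|C| / c + 1 + 1) = |C| + 2 * c := by field_simp; ring
  rw [h6] at h5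
  linarith [le_abs_self C]

lemma aux_lower (tmin tmax p q c s m : ℝ) (hp : tmin ≤ p) (hpq : p ≤ q) (hq : q ≤ tmax)
    (hm : ∀ t ∈ Set.Ioo p q, m ≤ s * (c + t)) :
    (q - p) * Real.exp m ≤ ∫ t in Set.Ioo tmin tmax, Real.exp (s * (c + t)) := by
  have hint : IntegrableOn (fun t => Real.exp (s * (c + t))) (Set.Ioo tmin tmax) :=
    ((by fun_prop : Continuous fun t => Real.exp (s * (c + t))).integrableOn_Icc).mono_set
      Set.Ioo_subset_Icc_self
  have hsub : Set.Ioo p q ⊆ Set.Ioo tmin tmax := Set.Ioo_subset_Ioo hp hq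
  calc (q - p) * Real.exp m = ∫ t in Set.Ioo p q, Real.exp m := by
        simp [hpq]
    _ ≤ ∫ t in Set.Ioo p q, Real.exp (s * (c + t)) := by
        refine setIntegral_mono_on (by simp) (hint.mono_set hsub) measurableSet_Ioo ?_
        intro t ht
        exact Real.exp_le_exp.2 (hm t ht)
    _ ≤ _ := setIntegral_mono_set hint
        (Filter.Eventually.of_forall fun t => (Real.exp_pos _).le) hsub.eventuallyLE

lemma aux_ident (F G : ℂ → ℂ) (hF : Differentiable ℂ F) (hG : Differentiable ℂ G) (K : ℝ)
    (hK : 0 < K)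
    (hFG : (fun τ : ℝ => F τ) =ᵐ[volume.restrict (Set.Ioo 0 K)] fun τ : ℝ => G τ) : F = G := by
  have h1 : Set.EqOn (fun τ : ℝ => F τ) (fun τ : ℝ => G τ) (Set.Ioo 0 K) :=
    Measure.eqOn_open_of_ae_eq hFG isOpen_Ioo
      (hF.continuous.comp Complex.continuous_ofReal).continuousOn
      (hG.continuous.comp Complex.continuous_ofReal).continuousOn
  have hFa : AnalyticOnNhd ℂ F Set.univ := hF.differentiableOn.analyticOnNhd isOpen_univ
  have hGa : AnalyticOnNhd ℂ G Set.univ := hG.differentiableOn.analyticOnNhd isOpen_univ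
  refine hFa.eq_of_frequently_eq (z₀ := ((K / 2 : ℝ) : ℂ)) hGa ?_
  have ht : Filter.Tendsto (fun x : ℝ => (x : ℂ)) (nhdsWithin (K / 2) {K / 2}ᶜ)
      (nhdsWithin ((K / 2 : ℝ) : ℂ) {((K / 2 : ℝ) : ℂ)}ᶜ) := by
    refine tendsto_nhdsWithin_iff.2
      ⟨(Complex.continuous_ofReal.tendsto _).mono_left nhdsWithin_le_nhds, ?_⟩
    filter_upwards [self_mem_nhdsWithin] with x hx
    simpa only [Set.mem_compl_iff, Set.mem_singleton_iff, Complex.ofReal_inj] using hx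
  refine ht.frequently (Filter.Eventually.frequently ?_)
  have : Set.Ioo 0 K ∈ nhds (K / 2) := Ioo_mem_nhds (by linarith) (by linarith)
  filter_upwards [nhdsWithin_le_nhds this] with x hx
  exact h1 hx

/-- If there exist `y ∈ ℝ^d` and `ψ ∈ L²(t_min,t_max)` such that
`L^{(x̂)}ψ = φ_y^{(x̂)}` in `L²(0,K)`, then `ξ_max − ξ_min ≥ T`. Here
`(Lψ)(τ) = ∫_{t_min}^{t_max} e^{−iτ h(t)} ψ(t) dt`,
`φ_y^{(x̂)}(k) = (1/T) ∫_{t_min}^{t_max} e^{−ik(x̂·y + t)} dt`,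
`ξ_min = inf h`, `ξ_max = sup h` over `[t_min,t_max]`. -/
theorem testFunction_in_range_implies_observable
    {d : ℕ} (hd : d = 2 ∨ d = 3)
    (tmin tmax T : ℝ) (htmin : 0 < tmin) (htt : tmin < tmax)
    (hT : T = tmax - tmin)
    (K : ℝ) (hK : 0 < K)
    (a : ℝ → EuclideanSpace ℝ (Fin d))
    (ha : ContDiffOn ℝ 1 a (Set.Icc tmin tmax))
    (xhat : EuclideanSpace ℝ (Fin d)) (hxhat : ‖xhat‖ = 1)
    (h : ℝ → ℝ) (hh : ∀ t, h t = t + inner ℝ xhat (a t))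
    (L : Lp ℂ 2 (volume.restrict (Set.Ioo tmin tmax)) →L[ℂ]
         Lp ℂ 2 (volume.restrict (Set.Ioo 0 K)))
    (hL : ∀ ψ : Lp ℂ 2 (volume.restrict (Set.Ioo tmin tmax)),
      (L ψ : ℝ → ℂ) =ᵐ[volume.restrict (Set.Ioo 0 K)]
        fun τ => ∫ t in Set.Ioo tmin tmax,
          Complex.exp (-(Complex.I) * τ * (h t)) * ψ t)
    (hexists : ∃ (y : EuclideanSpace ℝ (Fin d))
        (ψ : Lp ℂ 2 (volume.restrict (Set.Ioo tmin tmax))),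
      (L ψ : ℝ → ℂ) =ᵐ[volume.restrict (Set.Ioo 0 K)]
        fun k => (1 / (T : ℂ)) *
          ∫ t in Set.Ioo tmin tmax,
            Complex.exp (-(Complex.I) * k * ((inner ℝ xhat y : ℝ) + t))) :
    sSup (h '' Set.Icc tmin tmax) - sInf (h '' Set.Icc tmin tmax) ≥ T := by
  obtain ⟨y, ψ, hψ⟩ := hexists
  have hTpos : 0 < T := by rw [hT]; linarith
  set c : ℝ := inner ℝ xhat y with hc
  have hcont : ContinuousOn h (Set.Icc tmin tmax) := by
    have : h = fun t => t + inner ℝ xhat (a t) := funext hh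
    rw [this]
    exact continuousOn_id.add (continuousOn_const.inner ha.continuousOn)
  have hcomp : IsCompact (h '' Set.Icc tmin tmax) := isCompact_Icc.image_of_continuousOn hcont
  set S := sSup (h '' Set.Icc tmin tmax)
  set I := sInf (h '' Set.Icc tmin tmax)
  have hS : ∀ t ∈ Set.Ioo tmin tmax, h t ≤ S := fun t ht =>
    le_csSup hcomp.bddAbove ⟨t, Set.Ioo_subset_Icc_self ht, rfl⟩
  have hI : ∀ t ∈ Set.Ioo tmin tmax, I ≤ h t := fun t ht =>
    csInf_le hcomp.bddBelow ⟨t, Set.Ioo_subset_Icc_self ht, rfl⟩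
  have hψi : Integrable (fun t => ψ t) (volume.restrict (Set.Ioo tmin tmax)) :=
    (Lp.memLp ψ).integrable (by norm_num)
  have hF := aux_diff (μ := volume.restrict (Set.Ioo tmin tmax)) h (fun t => ψ t) (max |I| |S|)
    ((hcont.mono Set.Ioo_subset_Icc_self).aestronglyMeasurable measurableSet_Ioo)
    (by
      refine ae_restrict_of_forall_mem measurableSet_Ioo fun t ht => ?_
      exact abs_le_max_abs_abs (hI t ht) (hS t ht)) hψi
  have hG := aux_diff (μ := volume.restrict (Set.Ioo tmin tmax)) (fun t => c + t) (fun _ => 1)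
    (max |c + tmin| |c + tmax|)
    (by fun_prop)
    (by
      refine ae_restrict_of_forall_mem measurableSet_Ioo fun t ht => ?_
      exact abs_le_max_abs_abs (by linarith [ht.1]) (by linarith [ht.2]))
    (integrable_const _)
  have hFG := aux_ident _ _ hF (hG.const_mul (1 / (T : ℂ))) K hK (by
    refine (hL ψ).symm.trans (hψ.trans (Filter.EventuallyEq.of_eq ?_))
    funext k
    simp)
  have key : ∀ (s B : ℝ), (∀ t ∈ Set.Ioo tmin tmax, s * h t ≤ B) →
      1 / T * ∫ t in Set.Ioo tmin tmax, Real.exp (s * (c + t)) ≤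
        (∫ t in Set.Ioo tmin tmax, ‖ψ t‖) * Real.exp B := by
    intro s B hB
    have e := congrFun hFG (Complex.I * s)
    have e1 : ∀ r : ℝ, -(Complex.I) * (Complex.I * s) * (r : ℂ) = ((s * r : ℝ) : ℂ) := by
      intro r
      push_cast
      linear_combination (-(s : ℂ) * r) * Complex.I_mul_I
    simp only [e1, mul_one, ← Complex.ofReal_exp] at e
    rw [integral_complex_ofReal] at e
    have hnn : 0 ≤ ∫ t in Set.Ioo tmin tmax, Real.exp (s * (c + t)) :=
      integral_nonneg fun t => (Real.exp_pos _).le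
    have e2 := congrArg norm e
    rw [norm_mul, Complex.norm_real, Real.norm_of_nonneg hnn, norm_div, norm_one,
      Complex.norm_real, Real.norm_of_nonneg hTpos.le] at e2
    rw [← e2, ← integral_mul_const]
    refine norm_integral_le_of_norm_le (hψi.norm.mul_const _) ?_
    refine ae_restrict_of_forall_mem measurableSet_Ioo fun t ht => ?_
    rw [norm_mul, Complex.norm_real, Real.norm_of_nonneg (Real.exp_pos _).le, mul_comm]
    gcongr
    exact hB t ht
  have hmax : c + tmax ≤ S := by
    refine le_of_forall_pos_sub_le fun ε hε => ?_
    set δ := min ε T with hδ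
    have hδ0 : 0 < δ := lt_min hε hTpos
    have h1 : δ ≤ ε := min_le_left _ _
    have h2 : δ ≤ T := min_le_right _ _
    have := aux_growth (c + tmax - δ) S (∫ t in Set.Ioo tmin tmax, ‖ψ t‖) (1 / T * δ)
      (by positivity) (fun s hs => by
        refine le_trans ?_ (key s (s * S) fun t ht => by
          have := hS t ht
          gcongr)
        rw [mul_assoc]
        gcongr
        have := aux_lower tmin tmax (tmax - δ) tmax c s (s * (c + tmax - δ)) (by linarith)
          (by linarith) le_rfl (fun t ht => by
            have := ht.1
            gcongr
            linarith)
        simpa using this)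
    linarith
  have hmin : -(c + tmin) ≤ -I := by
    refine le_of_forall_pos_sub_le fun ε hε => ?_
    set δ := min ε T with hδ
    have hδ0 : 0 < δ := lt_min hε hTpos
    have h1 : δ ≤ ε := min_le_left _ _
    have h2 : δ ≤ T := min_le_right _ _
    have := aux_growth (-(c + tmin) - δ) (-I) (∫ t in Set.Ioo tmin tmax, ‖ψ t‖) (1 / T * δ)
      (by positivity) (fun s hs => by
        refine le_trans ?_ (key (-s) (s * (-I)) fun t ht => by
          have := hI t ht
          nlinarith)
        rw [mul_assoc]
        gcongr
        have := aux_lower tmin tmax tmin (tmin + δ) c (-s) (s * (-(c + tmin) - δ)) le_rfl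
          (by linarith) (by linarith) (fun t ht => by
            have := ht.2
            nlinarith)
        simpa using this)
    linarith
  rw [hT]
  linarith
end
end

section
/- Let the orbit be the straight line a(t) = c t (cos α, sin α) in ℝ² with speed c > 2, and let x̂ = (cos θ, sin θ). If θ ∈ [α − π/2, α + π/2] or θ ∈ [α + arccos(−2/c), α + 2π − arccos(−2/c)] (equivalently cos(θ − α) ≥ 0 or cos(θ − α) ≤ −2/c), then x̂ is an observable direction, i.e. ξ_max − ξ_min ≥ T. -/
open MeasureTheory

noncomputable section

/-- For the straight-line orbit `a(t) = c t (cos α, sin α)` in `ℝ²` with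
speed `c > 2` and direction `x̂ = (cos θ, sin θ)`: if `θ ∈ [α − π/2, α + π/2]` or
`θ ∈ [α + arccos(−2/c), α + 2π − arccos(−2/c)]` (equivalently `cos(θ − α) ≥ 0` or
`cos(θ − α) ≤ −2/c`), then `x̂` is an observable direction, i.e. `ξ_max − ξ_min ≥ T`. -/
theorem line_observable_fast
    (tmin tmax T : ℝ) (htmin : 0 < tmin) (htt : tmin < tmax)
    (hT : T = tmax - tmin)
    (c α θ : ℝ) (hc : 2 < c)
    (hθ : θ ∈ Set.Icc (α - Real.pi / 2) (α + Real.pi / 2) ∨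
      θ ∈ Set.Icc (α + Real.arccos (-2 / c))
        (α + 2 * Real.pi - Real.arccos (-2 / c)))
    (a : ℝ → EuclideanSpace ℝ (Fin 2))
    (ha : ∀ t, a t = (WithLp.equiv 2 (Fin 2 → ℝ)).symm
      ![c * t * Real.cos α, c * t * Real.sin α])
    (xhat : EuclideanSpace ℝ (Fin 2))
    (hx : xhat = (WithLp.equiv 2 (Fin 2 → ℝ)).symm ![Real.cos θ, Real.sin θ])
    (h : ℝ → ℝ) (hh : ∀ t, h t = t + inner ℝ xhat (a t)) :
    sSup (h '' Set.Icc tmin tmax) - sInf (h '' Set.Icc tmin tmax) ≥ T := by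
  have hk : ∀ t, h t = (1 + c * Real.cos (θ - α)) * t := by
    intro t
    rw [hh, ha, hx, Real.cos_sub]
    simp [PiLp.inner_apply, Fin.sum_univ_two]
    ring
  have hcpos : 0 < c := by linarith
  have hcos : 0 ≤ Real.cos (θ - α) ∨ Real.cos (θ - α) ≤ -2 / c := by
    rcases hθ with ⟨h1, h2⟩ | ⟨h1, h2⟩
    · left
      exact Real.cos_nonneg_of_neg_pi_div_two_le_of_le (by linarith) (by linarith)
    · right
      have e : Real.cos (Real.arccos (-2 / c)) = -2 / c := by
        apply Real.cos_arccos
        · rw [le_div_iff₀ hcpos]; linarith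
        · rw [div_le_iff₀ hcpos]; linarith
      have p := Real.arccos_nonneg (-2 / c)
      rw [← e]
      rcases le_total (θ - α) Real.pi with h3 | h3
      · exact Real.cos_le_cos_of_nonneg_of_le_pi p h3 (by linarith)
      · rw [← Real.cos_two_pi_sub (θ - α)]
        exact Real.cos_le_cos_of_nonneg_of_le_pi p (by linarith) (by linarith)
  have hcont : ContinuousOn h (Set.Icc tmin tmax) := by
    have : h = fun t => (1 + c * Real.cos (θ - α)) * t := funext hk
    rw [this]; fun_prop
  have hcomp := isCompact_Icc.image_of_continuousOn hcont
  have m1 : h tmin ∈ h '' Set.Icc tmin tmax := ⟨tmin, ⟨le_rfl, htt.le⟩, rfl⟩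
  have m2 : h tmax ∈ h '' Set.Icc tmin tmax := ⟨tmax, ⟨htt.le, le_rfl⟩, rfl⟩
  have s1 := le_csSup hcomp.bddAbove m1
  have s2 := le_csSup hcomp.bddAbove m2
  have i1 := csInf_le hcomp.bddBelow m1
  have i2 := csInf_le hcomp.bddBelow m2
  have d := hk tmin
  have d' := hk tmax
  rcases hcos with hp | hn
  · have := mul_nonneg (mul_nonneg hcpos.le hp) (sub_nonneg.2 htt.le)
    linarith
  · rw [le_div_iff₀ hcpos] at hn
    have := mul_nonneg (show 0 ≤ -2 - Real.cos (θ - α) * c by linarith) (sub_nonneg.2 htt.le)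
    linarith
end
end

section
/- Let the orbit be the circular arc a(t) = (cos t + z₁, sin t + z₂) in ℝ² for t ∈ [t_min, t_max], where z = (z₁, z₂) ∈ ℝ² and 0 < T = t_max − t_min < 2π. If θ ∈ [(t_max + t_min)/2, (t_max + t_min)/2 + π], then x̂ = (cos θ, sin θ) is an observable direction, i.e. ξ_max − ξ_min ≥ T. -/
open MeasureTheory

noncomputable section

/-- For the circular-arc orbit `a(t) = (cos t + z₁, sin t + z₂)` in `ℝ²`
with `0 < T = t_max − t_min < 2π`: if `θ ∈ [(t_max+t_min)/2, (t_max+t_min)/2 + π]`, then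
`x̂ = (cos θ, sin θ)` is an observable direction, i.e. `ξ_max − ξ_min ≥ T`. -/
theorem arc_observable
    (tmin tmax T : ℝ) (htmin : 0 < tmin) (htt : tmin < tmax)
    (hT : T = tmax - tmin) (hT2π : T < 2 * Real.pi)
    (z₁ z₂ θ : ℝ)
    (hθ : θ ∈ Set.Icc ((tmax + tmin) / 2) ((tmax + tmin) / 2 + Real.pi))
    (a : ℝ → EuclideanSpace ℝ (Fin 2))
    (ha : ∀ t, a t = (WithLp.equiv 2 (Fin 2 → ℝ)).symm
      ![Real.cos t + z₁, Real.sin t + z₂])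
    (xhat : EuclideanSpace ℝ (Fin 2))
    (hx : xhat = (WithLp.equiv 2 (Fin 2 → ℝ)).symm ![Real.cos θ, Real.sin θ])
    (h : ℝ → ℝ) (hh : ∀ t, h t = t + inner ℝ xhat (a t)) :
    sSup (h '' Set.Icc tmin tmax) - sInf (h '' Set.Icc tmin tmax) ≥ T := by
  have hf : ∀ t, h t = t + (Real.cos θ * (Real.cos t + z₁) + Real.sin θ * (Real.sin t + z₂)) := by
    intro t
    rw [hh, ha, hx]
    simp [PiLp.inner_apply, Fin.sum_univ_two]
    ring
  have hc : Continuous h := by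
    rw [funext hf]
    fun_prop
  have hK : IsCompact (h '' Set.Icc tmin tmax) := isCompact_Icc.image hc
  have h1 : h tmax ≤ sSup (h '' Set.Icc tmin tmax) :=
    le_csSup hK.bddAbove ⟨tmax, ⟨htt.le, le_rfl⟩, rfl⟩
  have h2 : sInf (h '' Set.Icc tmin tmax) ≤ h tmin :=
    csInf_le hK.bddBelow ⟨tmin, ⟨le_rfl, htt.le⟩, rfl⟩
  have hs1 : 0 ≤ Real.sin (θ - (tmax + tmin) / 2) :=
    Real.sin_nonneg_of_nonneg_of_le_pi (by linarith [hθ.1]) (by linarith [hθ.2])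
  have hs2 : 0 ≤ Real.sin ((tmax - tmin) / 2) :=
    Real.sin_nonneg_of_nonneg_of_le_pi (by linarith) (by linarith)
  have key := Real.cos_sub_cos (θ - tmax) (θ - tmin)
  have e1 : (θ - tmax + (θ - tmin)) / 2 = θ - (tmax + tmin) / 2 := by ring
  have e2 : (θ - tmax - (θ - tmin)) / 2 = -((tmax - tmin) / 2) := by ring
  rw [e1, e2, Real.sin_neg, Real.cos_sub, Real.cos_sub] at key
  have hp := mul_nonneg hs1 hs2
  rw [hf] at h1 h2
  nlinarith
end
end

section
/- Uniqueness at a single observable direction: let a, b : [t_min, t_max] → ℝ^d be continuously differentiable orbit functions whose far-field patterns agree, w_a∞(x̂, k) = w_b∞(x̂, k) for all k ∈ (k_min, k_max), at a direction x̂ that is observable for both a and b; assume in addition for each of a and b that h is not constant and the sets {t : cos(κ h(t)) = 0} and {t : sin(κ h(t)) = 0} have Lebesgue measure zero. Then the strips coincide: K_{Γ_a}^{(x̂)} = K_{Γ_b}^{(x̂)}. In particular, if additionally 1 + x̂·a'(t) > 0 and 1 + x̂·b'(t) > 0 on [t_min, t_max], then x̂·a(t_min) = x̂·b(t_min) and x̂·a(t_max)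 = x̂·b(t_max). -/
open MeasureTheory

noncomputable section

lemma aux_deriv_mono {d : ℕ} {tmin tmax : ℝ} (a a' : ℝ → EuclideanSpace ℝ (Fin d))
    (ha' : ∀ t ∈ Set.Icc tmin tmax, HasDerivWithinAt a (a' t) (Set.Icc tmin tmax) t)
    (xhat : EuclideanSpace ℝ (Fin d)) (h : ℝ → ℝ)
    (hh : ∀ t, h t = t + inner ℝ xhat (a t))
    (hp : ∀ t ∈ Set.Icc tmin tmax, 0 < 1 + (inner ℝ xhat (a' t) : ℝ)) :
    MonotoneOn h (Set.Icc tmin tmax) := by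
  have hd : ∀ t ∈ Set.Icc tmin tmax,
      HasDerivWithinAt h (1 + inner ℝ xhat (a' t)) (Set.Icc tmin tmax) t := by
    intro t ht
    have h1 := ((innerSL ℝ xhat).hasFDerivAt (x := a t)).comp_hasDerivWithinAt t (ha' t ht)
    have h2 := (hasDerivWithinAt_id t (Set.Icc tmin tmax)).add h1
    refine h2.congr_of_mem (fun s _ => ?_) ht
    simp [hh]
  refine monotoneOn_of_hasDerivWithinAt_nonneg (convex_Icc _ _)
    (fun t ht => (hd t ht).continuousWithinAt)
    (fun t ht => (hd t (interior_subset ht)).mono interior_subset)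
    (fun t ht => (hp t (interior_subset ht)).le)

lemma aux_closed {tmin tmax : ℝ} (htt : tmin < tmax) (f g : ℝ → ℝ)
    (hf : ContinuousOn f (Set.Icc tmin tmax)) (hg : ContinuousOn g (Set.Icc tmin tmax))
    (hm : (volume.restrict (Set.Ioo tmin tmax)).map f
      = (volume.restrict (Set.Ioo tmin tmax)).map g) :
    f '' Set.Icc tmin tmax ⊆ g '' Set.Icc tmin tmax := by
  set C := g '' Set.Icc tmin tmax with hC
  have hCc : IsClosed C := (isCompact_Icc.image_of_continuousOn hg).isClosed
  have hf' := hf.mono (Set.Ioo_subset_Icc_self)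
  have hg' := hg.mono (Set.Ioo_subset_Icc_self)
  have hfm := hf'.aemeasurable (μ := volume) measurableSet_Ioo
  have hgm := hg'.aemeasurable (μ := volume) measurableSet_Ioo
  have h0 : (volume.restrict (Set.Ioo tmin tmax)).map f Cᶜ = 0 := by
    rw [hm, Measure.map_apply_of_aemeasurable hgm hCc.measurableSet.compl,
      Measure.restrict_apply' measurableSet_Ioo]
    convert measure_empty (μ := (volume : Measure ℝ))
    ext t
    simp only [Set.mem_inter_iff, Set.mem_preimage, Set.mem_compl_iff, Set.mem_empty_iff_false,
      iff_false, not_and, not_not]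
    intro h1 h2
    exact h1 ⟨t, Set.Ioo_subset_Icc_self h2, rfl⟩
  rw [Measure.map_apply_of_aemeasurable hfm hCc.measurableSet.compl,
      Measure.restrict_apply' measurableSet_Ioo, Set.inter_comm] at h0
  have ho : IsOpen (Set.Ioo tmin tmax ∩ f ⁻¹' Cᶜ) :=
    hf'.isOpen_inter_preimage isOpen_Ioo hCc.isOpen_compl
  have he := (ho.measure_eq_zero_iff volume).1 h0
  have hmaps : Set.MapsTo f (Set.Ioo tmin tmax) C := by
    intro t ht
    by_contra hn
    have : t ∈ Set.Ioo tmin tmax ∩ f ⁻¹' Cᶜ := ⟨ht, hn⟩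
    rw [he] at this
    exact this
  rw [← closure_Ioo htt.ne] at hf ⊢
  have := hmaps.closure_of_continuousOn hf
  rw [hCc.closure_eq] at this
  exact this.image_subset

lemma aux_expset {tmin tmax : ℝ} (f : ℝ → ℝ) (hf : ContinuousOn f (Set.Icc tmin tmax)) :
    ProbabilityTheory.integrableExpSet f (volume.restrict (Set.Ioo tmin tmax)) = Set.univ := by
  ext s
  simp only [ProbabilityTheory.integrableExpSet, Set.mem_setOf_eq, Set.mem_univ, iff_true]
  have : ContinuousOn (fun t => Real.exp (s * f t)) (Set.Icc tmin tmax) :=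
    Real.continuous_exp.comp_continuousOn (continuousOn_const.mul hf)
  exact (this.integrableOn_Icc).mono_set Set.Ioo_subset_Icc_self

lemma aux_map {tmin tmax kmin kmax : ℝ} (hkk : kmin < kmax) (f g : ℝ → ℝ)
    (hf : ContinuousOn f (Set.Icc tmin tmax)) (hg : ContinuousOn g (Set.Icc tmin tmax))
    (hdata : ∀ k ∈ Set.Ioo kmin kmax,
        (∫ t in Set.Ioo tmin tmax, Complex.exp (-(Complex.I) * k * (f t)))
      = ∫ t in Set.Ioo tmin tmax, Complex.exp (-(Complex.I) * k * (g t))) :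
    (volume.restrict (Set.Ioo tmin tmax)).map f
      = (volume.restrict (Set.Ioo tmin tmax)).map g := by
  have hfm := (hf.mono (Set.Ioo_subset_Icc_self)).aemeasurable (μ := volume) measurableSet_Ioo
  have hgm := (hg.mono (Set.Ioo_subset_Icc_self)).aemeasurable (μ := volume) measurableSet_Ioo
  have key : ∀ u : ℝ → ℝ, ContinuousOn u (Set.Icc tmin tmax) → AnalyticOnNhd ℂ
      (ProbabilityTheory.complexMGF u (volume.restrict (Set.Ioo tmin tmax))) Set.univ := by
    intro u hu
    have := ProbabilityTheory.analyticOnNhd_complexMGF (X := u)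
      (μ := volume.restrict (Set.Ioo tmin tmax))
    rw [aux_expset u hu] at this
    simpa using this
  refine Measure.ext_of_complexMGF_eq hfm hgm ?_
  refine (key f hf).eq_of_frequently_eq (z₀ := -Complex.I * (((kmin + kmax) / 2 : ℝ) : ℂ))
    (key g hg) ?_
  have hev : ∃ᶠ k : ℝ in nhdsWithin ((kmin + kmax) / 2) {((kmin + kmax) / 2)}ᶜ,
      k ∈ Set.Ioo kmin kmax := by
    apply Filter.Eventually.frequently
    exact mem_nhdsWithin_of_mem_nhds (Ioo_mem_nhds (by linarith) (by linarith))
  have ht : Filter.Tendsto (fun k : ℝ => -Complex.I * (k : ℂ))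
      (nhdsWithin ((kmin + kmax) / 2) {((kmin + kmax) / 2)}ᶜ)
      (nhdsWithin (-Complex.I * (((kmin + kmax) / 2 : ℝ) : ℂ))
        {-Complex.I * (((kmin + kmax) / 2 : ℝ) : ℂ)}ᶜ) := by
    apply ContinuousWithinAt.tendsto_nhdsWithin
    · exact (by fun_prop : Continuous fun k : ℝ => -Complex.I * (k : ℂ)).continuousWithinAt
    · intro k hk h
      apply hk
      have := mul_left_cancel₀ (neg_ne_zero.2 Complex.I_ne_zero) h
      exact_mod_cast this
  refine ht.frequently (hev.mono fun k hk => ?_)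
  simpa [ProbabilityTheory.complexMGF] using hdata k hk

/-- uniqueness at a single observable direction. Let `a, b` be C¹ orbit
functions whose far-field patterns agree on `(k_min, k_max)` at a direction `x̂` observable
for both, and assume for each orbit that `h` is not constant and the zero sets of
`cos(κ h(·))`, `sin(κ h(·))` have measure zero. Then the strips coincide:
`K_{Γ_a}^{(x̂)} = K_{Γ_b}^{(x̂)}`. In particular, if additionally `1 + x̂·a'(t) > 0` and
`1 + x̂·b'(t) > 0` on `[t_min,t_max]`, then `x̂·a(t_min) = x̂·b(t_min)` and
`x̂·a(t_max) = x̂·b(t_max)`. -/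
theorem uniqueness_single_observable_direction
    {d : ℕ} (hd : d = 2 ∨ d = 3)
    (tmin tmax T : ℝ) (htmin : 0 < tmin) (htt : tmin < tmax)
    (hT : T = tmax - tmin)
    (kmin kmax : ℝ) (hkmin : 0 < kmin) (hkk : kmin < kmax)
    (κ K : ℝ) (hκ : κ = (kmin + kmax) / 2) (hKdef : K = (kmax - kmin) / 2)
    (a b a' b' : ℝ → EuclideanSpace ℝ (Fin d))
    (ha : ContDiffOn ℝ 1 a (Set.Icc tmin tmax))
    (hb : ContDiffOn ℝ 1 b (Set.Icc tmin tmax))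
    (ha' : ∀ t ∈ Set.Icc tmin tmax,
      HasDerivWithinAt a (a' t) (Set.Icc tmin tmax) t)
    (hb' : ∀ t ∈ Set.Icc tmin tmax,
      HasDerivWithinAt b (b' t) (Set.Icc tmin tmax) t)
    (xhat : EuclideanSpace ℝ (Fin d)) (hxhat : ‖xhat‖ = 1)
    (hA hB : ℝ → ℝ)
    (hhA : ∀ t, hA t = t + inner ℝ xhat (a t))
    (hhB : ∀ t, hB t = t + inner ℝ xhat (b t))
    (ξminA ξmaxA ξminB ξmaxB : ℝ)
    (hξminA : ξminA = sInf (hA '' Set.Icc tmin tmax))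
    (hξmaxA : ξmaxA = sSup (hA '' Set.Icc tmin tmax))
    (hξminB : ξminB = sInf (hB '' Set.Icc tmin tmax))
    (hξmaxB : ξmaxB = sSup (hB '' Set.Icc tmin tmax))
    (hobsA : ξmaxA - ξminA ≥ T) (hobsB : ξmaxB - ξminB ≥ T)
    (hncA : ∃ t ∈ Set.Icc tmin tmax, ∃ s ∈ Set.Icc tmin tmax, hA t ≠ hA s)
    (hncB : ∃ t ∈ Set.Icc tmin tmax, ∃ s ∈ Set.Icc tmin tmax, hB t ≠ hB s)
    (hcosA : volume {t ∈ Set.Icc tmin tmax | Real.cos (κ * hA t) = 0} = 0)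
    (hsinA : volume {t ∈ Set.Icc tmin tmax | Real.sin (κ * hA t) = 0} = 0)
    (hcosB : volume {t ∈ Set.Icc tmin tmax | Real.cos (κ * hB t) = 0} = 0)
    (hsinB : volume {t ∈ Set.Icc tmin tmax | Real.sin (κ * hB t) = 0} = 0)
    (hdata : ∀ k ∈ Set.Ioo kmin kmax,
      (1 / Real.sqrt (2 * Real.pi)) *
        (∫ t in Set.Ioo tmin tmax, Complex.exp (-(Complex.I) * k * (hA t)))
      = (1 / Real.sqrt (2 * Real.pi)) *
        ∫ t in Set.Ioo tmin tmax, Complex.exp (-(Complex.I) * k * (hB t))) :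
    ({y : EuclideanSpace ℝ (Fin d) | ξminA - tmin ≤ inner ℝ xhat y ∧
        (inner ℝ xhat y : ℝ) ≤ ξmaxA - tmax}
      = {y : EuclideanSpace ℝ (Fin d) | ξminB - tmin ≤ inner ℝ xhat y ∧
        (inner ℝ xhat y : ℝ) ≤ ξmaxB - tmax}) ∧
    ((∀ t ∈ Set.Icc tmin tmax, 0 < 1 + (inner ℝ xhat (a' t) : ℝ)) →
      (∀ t ∈ Set.Icc tmin tmax, 0 < 1 + (inner ℝ xhat (b' t) : ℝ)) →
      (inner ℝ xhat (a tmin) : ℝ) = inner ℝ xhat (b tmin) ∧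
      (inner ℝ xhat (a tmax) : ℝ) = inner ℝ xhat (b tmax)) := by
  have hcA : ContinuousOn hA (Set.Icc tmin tmax) := by
    have : hA = fun t => t + inner ℝ xhat (a t) := funext hhA
    rw [this]
    exact continuousOn_id.add (continuousOn_const.inner ha.continuousOn)
  have hcB : ContinuousOn hB (Set.Icc tmin tmax) := by
    have : hB = fun t => t + inner ℝ xhat (b t) := funext hhB
    rw [this]
    exact continuousOn_id.add (continuousOn_const.inner hb.continuousOn)
  have hm := aux_map hkk hA hB hcA hcB (fun k hk => by
    refine mul_left_cancel₀ ?_ (hdata k hk)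
    have : Real.sqrt (2 * Real.pi) ≠ 0 := by positivity
    simpa using this)
  have himg : hA '' Set.Icc tmin tmax = hB '' Set.Icc tmin tmax :=
    (aux_closed htt hA hB hcA hcB hm).antisymm (aux_closed htt hB hA hcB hcA hm.symm)
  refine ⟨by rw [hξminA, hξmaxA, hξminB, hξmaxB, himg], fun hpa hpb => ?_⟩
  have mA := aux_deriv_mono a a' ha' xhat hA hhA hpa
  have mB := aux_deriv_mono b b' hb' xhat hB hhB hpb
  have e1 := mA.map_isLeast (isLeast_Icc htt.le)
  have e2 := mB.map_isLeast (isLeast_Icc htt.le)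
  have e3 := mA.map_isGreatest (isGreatest_Icc htt.le)
  have e4 := mB.map_isGreatest (isGreatest_Icc htt.le)
  rw [himg] at e1 e3
  have f1 := e1.unique e2
  have f2 := e3.unique e4
  rw [hhA, hhB] at f1 f2
  constructor <;> linarith
end
end
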